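/- For every θ ∈ [0, π/2] there exist positive semidefinite real symmetric 2×2 matrices C_1, C_2, C_3, C_4, C_5, C_6 such that C_1 − 2C_2 + C_3 + C_4 − 2C_5 + C_6 = diag(1,−2), C_1 + C_2 − 2C_3 + C_4 + C_5 − 2C_6 = diag(−2,1), C_1 + C_2 + C_3 − C_4 − C_5 − C_6 = X_3(θ), and C_1 + C_2 + C_3 + C_4 + C_5 + C_6 = (4/(1+√3))·I_2. -/

import Mathlib

open Matrix

/-- The real symmetric 2×2 matrix `[[cos θ, sin θ],[sin θ, −cos θ]]`. -/
noncomputable def X3 (θ : ℝ) : Matrix (Fin 2) (Fin 2) ℝ :=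
  !![Real.cos θ, Real.sin θ; Real.sin θ, -Real.cos θ]

/-!
Put `t = 4 / (1 + √3)`, `A₀ = I`, `A₁ = diag(1, -2)`, `A₂ = diag(-2, 1)`. Since `A₀ + A₁ + A₂ = 0`,
the equations say that `Cᵢ₊₁ + Cᵢ₊₄` is the effect `Fᵢ = (t I - Aᵢ) / 3` of a three-outcome
measurement of total weight `t`, while `(C₁ + C₂ + C₃) - (C₄ + C₅ + C₆) = X₃(θ)`. Measure `F`
with Kraus operators `Kᵢ = √Fᵢ`, then a two-outcome observable `N` with `N² ≤ 1`: the effects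
`Kᵢ (1 ± N) Kᵢ / 2` have the right sums over the sign, and their differences add up to
`∑ᵢ Kᵢ N Kᵢ`. As the `Kᵢ` are diagonal, this scales the diagonal of `N` by `t` and its off-diagonal
entries by `v(t) = ∑ᵢ √(Fᵢ)₀₀ √(Fᵢ)₁₁`. The value of `t` is the positive root of `t² + 4t = 8`, at
which `v(t) = 1`; since `t ≥ 1`, the preimage `N` of `X₃(θ)` still satisfies `N² ≤ 1`.
-/

section SequentialMeasurement

open scoped ComplexOrder

variable {m n 𝕜 : Type*} [Fintype m] [DecidableEq m] [RCLike 𝕜]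

lemma posSemidef_one_add_of_posSemidef_one_sub_sq {N : Matrix m m 𝕜} (hN : N.IsHermitian)
    (hsq : (1 - N * N).PosSemidef) : (1 + N).PosSemidef := by
  have hsquare : ((1 + N) * (1 + N)).PosSemidef := by
    have hself : (1 + N).IsHermitian := isHermitian_one.add hN
    nth_rw 1 [← hself.eq]
    exact posSemidef_conjTranspose_mul_self (1 + N)
  have hdecomp : 1 + N = (2⁻¹ : ℝ) • ((1 + N) * (1 + N) + (1 - N * N)) := by
    simp only [add_mul, mul_add, one_mul, mul_one]
    module
  rw [hdecomp]
  exact (hsquare.add hsq).smul (by norm_num)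

/-- The effect of obtaining the outcome with Kraus operator `K` and then the outcome `+` of the
two-outcome measurement `(1 ± N) / 2`; the outcome `-` is obtained by replacing `N` with `-N`. -/
noncomputable def sequentialEffect (K : Matrix m n 𝕜) (N : Matrix m m 𝕜) : Matrix n n 𝕜 :=
  (2⁻¹ : ℝ) • (Kᴴ * (1 + N) * K)

lemma posSemidef_sequentialEffect [Finite n] (K : Matrix m n 𝕜) {N : Matrix m m 𝕜}
    (hN : N.IsHermitian) (hsq : (1 - N * N).PosSemidef) : (sequentialEffect K N).PosSemidef :=
  ((posSemidef_one_add_of_posSemidef_one_sub_sq hN hsq).conjTranspose_mul_mul_same K).smul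
    (by norm_num)

lemma posSemidef_sequentialEffect_neg [Finite n] (K : Matrix m n 𝕜) {N : Matrix m m 𝕜}
    (hN : N.IsHermitian) (hsq : (1 - N * N).PosSemidef) : (sequentialEffect K (-N)).PosSemidef :=
  posSemidef_sequentialEffect K hN.neg (by rwa [neg_mul_neg])

lemma sequentialEffect_add_neg (K : Matrix m n 𝕜) (N : Matrix m m 𝕜) :
    sequentialEffect K N + sequentialEffect K (-N) = Kᴴ * K := by
  simp only [sequentialEffect, Matrix.mul_add, Matrix.add_mul, Matrix.mul_one, Matrix.mul_neg,
    Matrix.neg_mul]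
  module

lemma sequentialEffect_sub_neg (K : Matrix m n 𝕜) (N : Matrix m m 𝕜) :
    sequentialEffect K N - sequentialEffect K (-N) = Kᴴ * N * K := by
  simp only [sequentialEffect, Matrix.mul_add, Matrix.add_mul, Matrix.mul_one, Matrix.mul_neg,
    Matrix.neg_mul]
  module

end SequentialMeasurement

lemma isHermitian_traceless (p q : ℝ) : (!![p, q; q, -p]).IsHermitian := by
  ext i j
  fin_cases i <;> fin_cases j <;> rfl

lemma posSemidef_one_sub_traceless_sq {p q : ℝ} (h : p ^ 2 + q ^ 2 ≤ 1) :
    (1 - !![p, q; q, -p] * !![p, q; q, -p]).PosSemidef := by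
  have hscalar : 1 - !![p, q; q, -p] * !![p, q; q, -p] =
      (1 - (p ^ 2 + q ^ 2)) • (1 : Matrix (Fin 2) (Fin 2) ℝ) := by
    ext i j
    fin_cases i <;> fin_cases j <;> simp <;> ring
  rw [hscalar]
  exact PosSemidef.one.smul (sub_nonneg.2 h)

lemma sum_diagonal_mul_mul_diagonal_apply {ι n R : Type*} [Fintype ι] [Fintype n] [DecidableEq n]
    [CommSemiring R] (d e : ι → n → R) (N : Matrix n n R) (j k : n) :
    (∑ i, diagonal (d i) * N * diagonal (e i)) j k = (∑ i, d i j * e i k) * N j k := by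
  simp only [Matrix.sum_apply, mul_diagonal, diagonal_mul, Finset.sum_mul, mul_right_comm]

/-- The diagonals of `A₀ = I`, `A₁ = diag(1, -2)` and `A₂ = diag(-2, 1)`. -/
def targetDiag : Fin 3 → Fin 2 → ℝ := ![![1, 1], ![1, -2], ![-2, 1]]

lemma targetDiag_le_one (i : Fin 3) (j : Fin 2) : targetDiag i j ≤ 1 := by
  fin_cases i <;> fin_cases j <;> norm_num [targetDiag]

/-- The diagonal of the Kraus operator `√((t I - Aᵢ) / 3)`, meaningful for `1 ≤ t`. -/
noncomputable def krausDiag (t : ℝ) (i : Fin 3) (j : Fin 2) : ℝ :=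
  √((t - targetDiag i j) / 3)

/-- The Kraus operator `√((t I - Aᵢ) / 3)`. -/
noncomputable def kraus (t : ℝ) (i : Fin 3) : Matrix (Fin 2) (Fin 2) ℝ :=
  diagonal (krausDiag t i)

/-- The factor by which `N ↦ ∑ᵢ Kᵢ N Kᵢ` scales off-diagonal entries, for `K = kraus t`. -/
noncomputable def coherence (t : ℝ) : ℝ := ∑ i, krausDiag t i 0 * krausDiag t i 1

lemma krausDiag_mul_self {t : ℝ} (ht : 1 ≤ t) (i : Fin 3) (j : Fin 2) :
    krausDiag t i j * krausDiag t i j = (t - targetDiag i j) / 3 :=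
  Real.mul_self_sqrt (by linarith [targetDiag_le_one i j])

lemma smul_one_sub_three_smul_kraus_conjTranspose_mul_self {t : ℝ} (ht : 1 ≤ t) (i : Fin 3) :
    t • (1 : Matrix (Fin 2) (Fin 2) ℝ) - (3 : ℝ) • ((kraus t i)ᴴ * kraus t i) =
      diagonal (targetDiag i) := by
  rw [kraus, diagonal_conjTranspose, star_trivial, diagonal_mul_diagonal, smul_one_eq_diagonal,
    ← diagonal_smul, diagonal_sub]
  congr 1
  ext j
  simp only [Pi.smul_apply, smul_eq_mul, krausDiag_mul_self ht]
  ring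

lemma sum_krausDiag_mul_self {t : ℝ} (ht : 1 ≤ t) (j : Fin 2) :
    ∑ i, krausDiag t i j * krausDiag t i j = t := by
  simp only [krausDiag_mul_self ht, Fin.sum_univ_three]
  fin_cases j <;> simp [targetDiag] <;> ring

lemma sum_kraus_conjTranspose_mul_self {t : ℝ} (ht : 1 ≤ t) :
    ∑ i, (kraus t i)ᴴ * kraus t i = t • (1 : Matrix (Fin 2) (Fin 2) ℝ) := by
  simp only [kraus, diagonal_conjTranspose, star_trivial, diagonal_mul_diagonal,
    smul_one_eq_diagonal]
  ext j k
  rcases eq_or_ne j k with rfl | hjk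
  · simp only [Matrix.sum_apply, diagonal_apply_eq, sum_krausDiag_mul_self ht]
  · simp only [Matrix.sum_apply, diagonal_apply_ne _ hjk, Finset.sum_const_zero]

lemma sum_kraus_mul_traceless_mul {t : ℝ} (ht : 1 ≤ t) (p q : ℝ) :
    ∑ i, (kraus t i)ᴴ * !![p, q; q, -p] * kraus t i =
      !![t * p, coherence t * q; coherence t * q, -(t * p)] := by
  have hcomm : ∑ i, krausDiag t i 1 * krausDiag t i 0 = coherence t :=
    Finset.sum_congr rfl fun i _ ↦ mul_comm _ _
  simp only [kraus, diagonal_conjTranspose, star_trivial]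
  ext j k
  rw [sum_diagonal_mul_mul_diagonal_apply]
  fin_cases j <;> fin_cases k <;>
    simp [sum_krausDiag_mul_self ht, hcomm, coherence]

theorem exists_posSemidef_of_one_le {t p q : ℝ} (ht : 1 ≤ t) (hpq : p ^ 2 + q ^ 2 ≤ 1) :
    ∃ C : Fin 6 → Matrix (Fin 2) (Fin 2) ℝ,
      (∀ i, (C i).PosSemidef) ∧
      C 0 - (2 : ℝ) • C 1 + C 2 + C 3 - (2 : ℝ) • C 4 + C 5 = !![(1 : ℝ), 0; 0, -2] ∧
      C 0 + C 1 - (2 : ℝ) • C 2 + C 3 + C 4 - (2 : ℝ) • C 5 = !![(-2 : ℝ), 0; 0, 1] ∧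
      C 0 + C 1 + C 2 - C 3 - C 4 - C 5 =
        !![t * p, coherence t * q; coherence t * q, -(t * p)] ∧
      C 0 + C 1 + C 2 + C 3 + C 4 + C 5 = t • (1 : Matrix (Fin 2) (Fin 2) ℝ) := by
  let N : Matrix (Fin 2) (Fin 2) ℝ := !![p, q; q, -p]
  have hN : N.IsHermitian := isHermitian_traceless p q
  have hsq : (1 - N * N).PosSemidef := posSemidef_one_sub_traceless_sq hpq
  let P (i : Fin 3) := sequentialEffect (kraus t i) N
  let M (i : Fin 3) := sequentialEffect (kraus t i) (-N)
  have hP (i) : (P i).PosSemidef := posSemidef_sequentialEffect _ hN hsq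
  have hM (i) : (M i).PosSemidef := posSemidef_sequentialEffect_neg _ hN hsq
  have htotal : ∑ i, (P i + M i) = t • (1 : Matrix (Fin 2) (Fin 2) ℝ) := by
    simp only [P, M, sequentialEffect_add_neg, sum_kraus_conjTranspose_mul_self ht]
  have hmarginal (i) : ∑ k, (P k + M k) - (3 : ℝ) • (P i + M i) = diagonal (targetDiag i) := by
    rw [htotal, sequentialEffect_add_neg,
      smul_one_sub_three_smul_kraus_conjTranspose_mul_self ht]
  have hdiff : ∑ i, (P i - M i) = !![t * p, coherence t * q; coherence t * q, -(t * p)] := by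
    simp only [P, M, sequentialEffect_sub_neg, N, sum_kraus_mul_traceless_mul ht]
  have hdiag₁ : diagonal (targetDiag 1) = !![(1 : ℝ), 0; 0, -2] := diagonal_fin_two _
  have hdiag₂ : diagonal (targetDiag 2) = !![(-2 : ℝ), 0; 0, 1] := diagonal_fin_two _
  rw [← hdiag₁, ← hdiag₂, ← hmarginal 1, ← hmarginal 2, ← hdiff, ← htotal]
  refine ⟨![P 0, P 1, P 2, M 0, M 1, M 2], ?_, ?_, ?_, ?_, ?_⟩
  · simp [Fin.forall_fin_succ, hP, hM]
  all_goals
    simp only [cons_val, Fin.sum_univ_three]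
    module

lemma coherence_eq_one {t : ℝ} (ht : 1 ≤ t) (hquad : t ^ 2 + 4 * t = 8) : coherence t = 1 := by
  have hcross : √((t - 1) / 3) * √((t + 2) / 3) = (4 - t) / 6 := by
    rw [← Real.sqrt_mul (by linarith), Real.sqrt_eq_iff_mul_self_eq (by nlinarith) (by nlinarith)]
    linear_combination (1 / 12 : ℝ) * hquad
  have hdiag : √((t - 1) / 3) * √((t - 1) / 3) = (t - 1) / 3 :=
    Real.mul_self_sqrt (by linarith)
  simp only [coherence, krausDiag, targetDiag, Fin.sum_univ_three, cons_val, sub_neg_eq_add]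
  linear_combination hdiag + 2 * hcross

lemma four_div_one_add_sqrt_three : 4 / (1 + √3) = 2 * √3 - 2 := by
  rw [div_eq_iff (by positivity)]
  linear_combination (-2 : ℝ) * Real.sq_sqrt (zero_le_three (α := ℝ))

lemma one_le_four_div_one_add_sqrt_three : 1 ≤ 4 / (1 + √3) := by
  have hsqrt : √3 ≤ 3 := Real.sqrt_le_iff.2 (by norm_num)
  rw [le_div_iff₀ (by positivity)]
  linarith

lemma coherence_four_div_one_add_sqrt_three : coherence (4 / (1 + √3)) = 1 := by
  refine coherence_eq_one one_le_four_div_one_add_sqrt_three ?_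
  rw [four_div_one_add_sqrt_three]
  linear_combination (4 : ℝ) * Real.sq_sqrt (zero_le_three (α := ℝ))

theorem stmt_2_general {x y : ℝ} (hxy : (x / (4 / (1 + √3))) ^ 2 + y ^ 2 ≤ 1) :
    ∃ C : Fin 6 → Matrix (Fin 2) (Fin 2) ℝ,
      (∀ i, (C i).PosSemidef) ∧
      C 0 - (2 : ℝ) • C 1 + C 2 + C 3 - (2 : ℝ) • C 4 + C 5 = !![(1 : ℝ), 0; 0, -2] ∧
      C 0 + C 1 - (2 : ℝ) • C 2 + C 3 + C 4 - (2 : ℝ) • C 5 = !![(-2 : ℝ), 0; 0, 1] ∧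
      C 0 + C 1 + C 2 - C 3 - C 4 - C 5 = !![x, y; y, -x] ∧
      C 0 + C 1 + C 2 + C 3 + C 4 + C 5 =
        (4 / (1 + √3)) • (1 : Matrix (Fin 2) (Fin 2) ℝ) := by
  have ht : 4 / (1 + √3) ≠ 0 := by positivity
  simpa only [coherence_four_div_one_add_sqrt_three, one_mul, mul_div_cancel₀ x ht] using
    exists_posSemidef_of_one_le one_le_four_div_one_add_sqrt_three hxy

lemma cos_div_sq_add_sin_sq_le_one {t : ℝ} (ht : 1 ≤ t) (θ : ℝ) :
    (Real.cos θ / t) ^ 2 + Real.sin θ ^ 2 ≤ 1 := by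
  rw [div_pow, ← Real.cos_sq_add_sin_sq θ]
  gcongr
  exact div_le_self (sq_nonneg _) (one_le_pow₀ ht)

/-- For every `θ ∈ [0, π/2]` there exist positive semidefinite real symmetric 2×2 matrices
`C_1, …, C_6` satisfying the four indicated linear matrix equations. -/
theorem stmt_2 (θ : ℝ) (hθ : θ ∈ Set.Icc (0 : ℝ) (Real.pi / 2)) :
    ∃ C : Fin 6 → Matrix (Fin 2) (Fin 2) ℝ,
      (∀ i, (C i).PosSemidef) ∧
      C 0 - (2 : ℝ) • C 1 + C 2 + C 3 - (2 : ℝ) • C 4 + C 5 = !![(1 : ℝ), 0; 0, -2] ∧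
      C 0 + C 1 - (2 : ℝ) • C 2 + C 3 + C 4 - (2 : ℝ) • C 5 = !![(-2 : ℝ), 0; 0, 1] ∧
      C 0 + C 1 + C 2 - C 3 - C 4 - C 5 = X3 θ ∧
      C 0 + C 1 + C 2 + C 3 + C 4 + C 5 =
        (4 / (1 + Real.sqrt 3)) • (1 : Matrix (Fin 2) (Fin 2) ℝ) :=
  stmt_2_general (cos_div_sq_add_sin_sq_le_one one_le_four_div_one_add_sqrt_three θ)
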